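/- The density p of GH(λ, α, β, δ, μ) satisfies p(x) = O(|x|^{λ−1}e^{−α|x|+βx}) and p'(x) = O(|x|^{λ−1}e^{−α|x|+βx}) as |x| → ∞; more precisely, p(x) ∼ ((α²−β²)^{λ/2}/(2(αδ)^λ K_λ(δ√(α²−β²))))·|x|^{λ−1}·e^{−α|x−μ|+β(x−μ)} as |x| → ∞. -/

import Mathlib

open Real MeasureTheory Filter Asymptotics

/-- Modified Bessel function of the first kind of order `ν`. -/
noncomputable def besselI (ν x : ℝ) : ℝ :=
  ∑' k : ℕ, (x / 2) ^ (ν + 2 * (k : ℝ)) / (Real.Gamma (ν + (k : ℝ) + 1) * (Nat.factorial k : ℝ))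

/-- Modified Bessel function of the second kind of order `ν`. -/
noncomputable def besselK (ν x : ℝ) : ℝ :=
  ∫ t in Set.Ioi (0 : ℝ), Real.exp (-x * Real.cosh t) * Real.cosh (ν * t)

/-- Density of the generalized hyperbolic distribution GH(λ, α, β, δ, μ). -/
noncomputable def ghPdf (lam α β δ μ x : ℝ) : ℝ :=
  ((α ^ 2 - β ^ 2) ^ (lam / 2) /
      (Real.sqrt (2 * Real.pi) * α ^ (lam - 1 / 2) * δ ^ lam *
        besselK lam (δ * Real.sqrt (α ^ 2 - β ^ 2)))) *
    Real.exp (β * (x - μ)) * (δ ^ 2 + (x - μ) ^ 2) ^ ((lam - 1 / 2) / 2) *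
    besselK (lam - 1 / 2) (α * Real.sqrt (δ ^ 2 + (x - μ) ^ 2))

/-- Density of the generalized inverse Gaussian distribution GIG(λ, a, b). -/
noncomputable def gigPdf (lam a b x : ℝ) : ℝ :=
  if 0 < x then
    (a / b) ^ (lam / 2) * (1 / (2 * besselK lam (Real.sqrt (a * b)))) *
      x ^ (lam - 1) * Real.exp (-(a * x + b / x) / 2)
  else 0


lemma coshGe (t : ℝ) : 1 + t ^ 2 / 2 ≤ Real.cosh t := by
  have h := Real.cosh_two_mul (t / 2)
  have h2 := Real.cosh_sq (t / 2)
  rw [show 2 * (t / 2) = t by ring] at h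
  have h3 : (t / 2) ^ 2 ≤ Real.sinh (t / 2) ^ 2 := by
    rw [sq_le_sq]
    rcases le_total 0 (t / 2) with h0 | h0
    · rw [abs_of_nonneg h0, abs_of_nonneg (Real.sinh_nonneg_iff.2 h0)]
      exact Real.self_le_sinh_iff.2 h0
    · rw [abs_of_nonpos h0, abs_of_nonpos (Real.sinh_nonpos_iff.2 h0), ← Real.sinh_neg]
      exact Real.self_le_sinh_iff.2 (by linarith)
  nlinarith

lemma gaussCosh (b ν : ℝ) (hb : 0 < b) :
    Integrable (fun t : ℝ => Real.exp (-b * t ^ 2) * Real.cosh (ν * t)) := by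
  refine ((integrable_exp_neg_mul_sq (half_pos hb)).const_mul
    (Real.exp (ν ^ 2 / (2 * b)))).mono' (by fun_prop) (ae_of_all _ fun t => ?_)
  rw [Real.norm_of_nonneg (by positivity)]
  have key : ∀ s : ℝ, s * t ≤ b / 2 * t ^ 2 + s ^ 2 / (2 * b) := by
    intro s
    have : b / 2 * t ^ 2 + s ^ 2 / (2 * b) - s * t = (b * t - s) ^ 2 / (2 * b) := by
      field_simp; ring
    have h2 : 0 ≤ (b * t - s) ^ 2 / (2 * b) := by positivity
    linarith
  rw [← Real.exp_add, Real.cosh_eq, mul_div_assoc', mul_add, ← Real.exp_add, ← Real.exp_add]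
  have h1 : Real.exp (-b * t ^ 2 + ν * t) ≤ Real.exp (ν ^ 2 / (2 * b) + -(b / 2) * t ^ 2) := by
    apply Real.exp_le_exp.2
    have := key ν
    linarith
  have h2 : Real.exp (-b * t ^ 2 + -(ν * t)) ≤ Real.exp (ν ^ 2 / (2 * b) + -(b / 2) * t ^ 2) := by
    apply Real.exp_le_exp.2
    have := key (-ν)
    rw [neg_sq] at this
    linarith
  linarith

lemma besselInt (ν x : ℝ) (hx : 0 < x) :
    Integrable (fun t : ℝ => Real.exp (-x * Real.cosh t) * Real.cosh (ν * t)) := by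
  refine (gaussCosh (x / 2) ν (half_pos hx)).mono' (by fun_prop) (ae_of_all _ fun t => ?_)
  rw [Real.norm_of_nonneg (by positivity)]
  refine mul_le_mul_of_nonneg_right (Real.exp_le_exp.2 ?_) (by positivity)
  nlinarith [coshGe t]

lemma besselDeriv (ν x : ℝ) (hx : 0 < x) :
    HasDerivAt (besselK ν) (-((besselK (ν + 1) x + besselK (ν - 1) x) / 2)) x := by
  have hc : ∀ t : ℝ, Real.cosh t * Real.cosh (ν * t) =
      (Real.cosh ((ν + 1) * t) + Real.cosh ((ν - 1) * t)) / 2 := by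
    intro t
    rw [add_mul, sub_mul, one_mul, Real.cosh_add, Real.cosh_sub]
    ring
  have hI : ∀ y : ℝ, 0 < y → Integrable (fun t : ℝ =>
      Real.exp (-y * Real.cosh t) * (Real.cosh t * Real.cosh (ν * t)))
      (volume.restrict (Set.Ioi (0 : ℝ))) := by
    intro y hy
    have := ((besselInt (ν + 1) y hy).add (besselInt (ν - 1) y hy)).div_const 2
    refine (this.congr (ae_of_all _ fun t => ?_)).restrict
    simp only [hc, Pi.add_apply]
    ring
  have h := hasDerivAt_integral_of_dominated_loc_of_deriv_le (𝕜 := ℝ)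
    (μ := volume.restrict (Set.Ioi (0 : ℝ)))
    (F := fun y t => Real.exp (-y * Real.cosh t) * Real.cosh (ν * t))
    (F' := fun y t => -(Real.exp (-y * Real.cosh t) * (Real.cosh t * Real.cosh (ν * t))))
    (bound := fun t => Real.exp (-(x / 2) * Real.cosh t) * (Real.cosh t * Real.cosh (ν * t)))
    (x₀ := x) (s := Set.Ioi (x / 2)) (Ioi_mem_nhds (by linarith))
    (Filter.Eventually.of_forall fun y => by fun_prop)
    (besselInt ν x hx).restrict (by fun_prop)
    (ae_of_all _ fun t y hy => by
      have : x / 2 < y := hy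
      rw [norm_neg, Real.norm_of_nonneg (by positivity)]
      gcongr)
    (hI _ (half_pos hx))
    (ae_of_all _ fun t y hy => by
      have h1 : HasDerivAt (fun y : ℝ => -y * Real.cosh t) (-1 * Real.cosh t) y :=
        ((hasDerivAt_id y).neg).mul_const _
      convert! h1.exp.mul_const (Real.cosh (ν * t)) using 1
      ring)
  convert! h.2 using 1
  rw [integral_neg]
  congr 1
  simp only [besselK]
  rw [← integral_add (besselInt (ν + 1) x hx).restrict (besselInt (ν - 1) x hx).restrict,
    ← integral_div]
  congr 1
  ext t
  rw [hc]
  ring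

lemma coshLim (s : ℝ) : Tendsto (fun y : ℝ => y * (Real.cosh (s / √y) - 1)) atTop
    (nhds (s ^ 2 / 2)) := by
  have h0 : HasDerivAt Real.sinh 1 0 := by simpa using Real.hasDerivAt_sinh 0
  -- h u = sinh(s u/2)/u → s/2
  have h1 : HasDerivAt (fun u : ℝ => Real.sinh (s / 2 * u)) (s / 2) 0 := by
    have h2 : HasDerivAt (fun u : ℝ => s / 2 * u) (s / 2) 0 := by
      simpa using (hasDerivAt_id (0 : ℝ)).const_mul (s / 2)
    have h3 := h2.sinh
    simpa using h3
  have h2 := h1.tendsto_slope_zero_right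
  have h3 : Tendsto (fun y : ℝ => (√y)⁻¹) atTop (nhdsWithin 0 (Set.Ioi 0)) :=
    tendsto_inv_atTop_nhdsGT_zero.comp Real.tendsto_sqrt_atTop
  have h4 := ((h2.comp h3).pow 2).const_mul 2
  have e : 2 * (s / 2) ^ 2 = s ^ 2 / 2 := by ring
  rw [e] at h4
  refine h4.congr' ?_
  filter_upwards [eventually_gt_atTop 0] with y hy
  have h5 := Real.cosh_two_mul (s / 2 * (√y)⁻¹)
  rw [Real.cosh_sq, show 2 * (s / 2 * (√y)⁻¹) = s / √y by field_simp] at h5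
  simp only [Function.comp, h5, zero_add, mul_zero, Real.sinh_zero, sub_zero, smul_eq_mul, inv_inv,
    mul_pow, Real.sq_sqrt hy.le]
  ring

lemma besselLim (ν : ℝ) : Tendsto (fun y : ℝ => √y * Real.exp y * besselK ν y) atTop
    (nhds (√(π / 2))) := by
  have hg : ∫ s in Set.Ioi (0 : ℝ), Real.exp (-(1 / 2) * s ^ 2) = √(π / 2) := by
    rw [integral_gaussian_Ioi, show π / (1 / 2) = π / 2 * 2 ^ 2 by ring,
      Real.sqrt_mul (by positivity), Real.sqrt_sq (by norm_num)]
    ring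
  rw [← hg]
  have h := tendsto_integral_filter_of_dominated_convergence
    (μ := volume.restrict (Set.Ioi (0 : ℝ))) (l := (atTop : Filter ℝ))
    (F := fun y s => Real.exp (-(y * (Real.cosh (s / √y) - 1))) * Real.cosh (ν * (s / √y)))
    (f := fun s => Real.exp (-(1 / 2) * s ^ 2))
    (fun s => Real.exp (-(1 / 2) * s ^ 2) * Real.cosh (ν * s))
    (Filter.Eventually.of_forall fun y => by fun_prop)
    (by
      filter_upwards [eventually_ge_atTop 1] with y hy
      refine ae_of_all _ fun s => ?_
      have hy0 : 0 < y := by linarith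
      have h1 : 1 ≤ √y := Real.one_le_sqrt.2 hy
      rw [Real.norm_of_nonneg (by positivity)]
      gcongr
      · have h2 := coshGe (s / √y)
        rw [div_pow, Real.sq_sqrt hy0.le] at h2
        have h3 : y * (s ^ 2 / y / 2) = s ^ 2 / 2 := by field_simp
        have h4 : y * (s ^ 2 / y / 2) ≤ y * (Real.cosh (s / √y) - 1) := by
          gcongr; linarith
        linarith
      · rw [Real.cosh_le_cosh, abs_mul, abs_mul, abs_div, abs_of_pos (by positivity : 0 < √y)]
        gcongr
        exact div_le_self (abs_nonneg _) h1)
    (gaussCosh (1 / 2) ν (by norm_num)).restrict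
    (ae_of_all _ fun s => by
      have h1 : Tendsto (fun y : ℝ => s / √y) atTop (nhds 0) :=
        Real.tendsto_sqrt_atTop.const_div_atTop s
      have h2 : Tendsto (fun y : ℝ => Real.cosh (ν * (s / √y))) atTop (nhds 1) := by
        have : Continuous fun u : ℝ => Real.cosh (ν * u) := by fun_prop
        simpa using! (this.tendsto 0).comp h1
      have h3 := ((Real.continuous_exp.tendsto _).comp (coshLim s).neg).mul h2
      rw [mul_one, show -(s ^ 2 / 2) = -(1 / 2) * s ^ 2 by ring] at h3
      exact h3)
  refine h.congr' ?_
  filter_upwards [eventually_gt_atTop 0] with y hy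
  have hs : 0 < √y := Real.sqrt_pos.2 hy
  have h1 := integral_comp_mul_left_Ioi
    (fun t => Real.exp (-(y * (Real.cosh t - 1))) * Real.cosh (ν * t)) 0 (inv_pos.2 hs)
  simp only [mul_zero, inv_inv, smul_eq_mul] at h1
  rw [besselK, mul_assoc, ← integral_const_mul]
  simp only [div_eq_inv_mul]
  rw [h1]
  congr 2
  ext t
  rw [← mul_assoc, ← Real.exp_add]
  congr 2
  ring

lemma besselEquiv (ν : ℝ) : (besselK ν) ~[atTop]
    (fun y => √(π / 2) * (y ^ (-(1 / 2) : ℝ) * Real.exp (-y))) := by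
  have hc : 0 < √(π / 2) := by positivity
  apply isEquivalent_of_tendsto_one
  have := (besselLim ν).div_const (√(π / 2))
  rw [div_self hc.ne'] at this
  refine this.congr' ?_
  filter_upwards [eventually_gt_atTop 0] with y hy
  have hs : 0 < √y := Real.sqrt_pos.2 hy
  rw [Pi.div_apply, Real.rpow_neg hy.le, ← Real.sqrt_eq_rpow, Real.exp_neg]
  field_simp

lemma ghR_ge (δ u : ℝ) : |u| ≤ √(δ ^ 2 + u ^ 2) := by
  apply Real.abs_le_sqrt
  nlinarith [sq_nonneg δ]

lemma ghR_le (δ u : ℝ) (hδ : 0 < δ) : √(δ ^ 2 + u ^ 2) ≤ δ + |u| := by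
  rw [Real.sqrt_le_left (by positivity)]
  nlinarith [sq_abs u, abs_nonneg u]

lemma ghR_tendsto (δ μ : ℝ) :
    Tendsto (fun x : ℝ => √(δ ^ 2 + (x - μ) ^ 2)) (cocompact ℝ) atTop := by
  have h : Tendsto (fun x : ℝ => |x| - |μ|) (cocompact ℝ) atTop :=
    tendsto_atTop_add_const_right _ _ (tendsto_norm_cocompact_atTop (E := ℝ))
  refine tendsto_atTop_mono (fun x => ?_) h
  exact (abs_sub_abs_le_abs_sub x μ).trans (ghR_ge δ _)

lemma ghR_equiv (δ μ : ℝ) (hδ : 0 < δ) :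
    (fun x : ℝ => √(δ ^ 2 + (x - μ) ^ 2)) ~[cocompact ℝ] (fun x => |x|) := by
  apply IsLittleO.isEquivalent
  have h1 : (fun _ : ℝ => (1 : ℝ)) =o[cocompact ℝ] (fun x : ℝ => |x|) := by
    rw [isLittleO_const_left]
    right
    have h2 := tendsto_norm_cocompact_atTop (E := ℝ)
    refine h2.congr fun x => ?_
    simp
  refine IsBigO.trans_isLittleO ?_ h1
  refine IsBigO.of_bound (δ + |μ|) (Eventually.of_forall fun x => ?_)
  simp only [Pi.sub_apply, norm_one, mul_one, Real.norm_eq_abs]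
  have a1 := ghR_ge δ (x - μ)
  have a2 := ghR_le δ (x - μ) hδ
  have a3 := abs_sub_abs_le_abs_sub x μ
  have a4 := abs_sub x μ
  rw [abs_le]
  constructor <;> linarith

lemma ghExp_equiv (α δ μ : ℝ) (hδ : 0 < δ) :
    (fun x : ℝ => Real.exp (-(α * √(δ ^ 2 + (x - μ) ^ 2)))) ~[cocompact ℝ]
      (fun x => Real.exp (-α * |x - μ|)) := by
  apply isEquivalent_of_tendsto_one
  have h1 : Tendsto (fun x : ℝ => √(δ ^ 2 + (x - μ) ^ 2) - |x - μ|) (cocompact ℝ) (nhds 0) := by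
    refine squeeze_zero (fun x => sub_nonneg.2 (ghR_ge δ _)) (fun x => ?_)
      ((ghR_tendsto δ μ).const_div_atTop (δ ^ 2))
    have hp : 0 < √(δ ^ 2 + (x - μ) ^ 2) := by positivity
    rw [le_div_iff₀ hp]
    have h2 : √(δ ^ 2 + (x - μ) ^ 2) ^ 2 = δ ^ 2 + (x - μ) ^ 2 := Real.sq_sqrt (by positivity)
    have h3 := ghR_ge δ (x - μ)
    nlinarith [sq_abs (x - μ), abs_nonneg (x - μ)]
  have h2 := (Real.continuous_exp.tendsto _).comp (h1.const_mul (-α))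
  simp only [mul_zero, Real.exp_zero] at h2
  refine h2.congr fun x => ?_
  rw [Pi.div_apply, ← Real.exp_sub]
  simp only [Function.comp]
  congr 1
  ring

/-- The comparison function arising from the asymptotics of the Bessel function. -/
noncomputable def ghW (α δ μ x : ℝ) : ℝ :=
  (α * √(δ ^ 2 + (x - μ) ^ 2)) ^ (-(1 / 2) : ℝ) * Real.exp (-(α * √(δ ^ 2 + (x - μ) ^ 2)))

lemma ghK_equiv (ν α δ μ : ℝ) (hα : 0 < α) :
    (fun x : ℝ => besselK ν (α * √(δ ^ 2 + (x - μ) ^ 2))) ~[cocompact ℝ]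
      (fun x => √(π / 2) * ghW α δ μ x) :=
  (besselEquiv ν).comp_tendsto ((ghR_tendsto δ μ).const_mul_atTop hα)

lemma ghK_bigO (ν α δ μ : ℝ) (hα : 0 < α) :
    (fun x : ℝ => besselK ν (α * √(δ ^ 2 + (x - μ) ^ 2))) =O[cocompact ℝ] ghW α δ μ :=
  (ghK_equiv ν α δ μ hα).isBigO.trans (isBigO_const_mul_self _ _ _)

lemma ghH_equiv (lam α β δ μ : ℝ) (hα : 0 < α) (hδ : 0 < δ) :
    (fun x : ℝ => Real.exp (β * (x - μ)) * (δ ^ 2 + (x - μ) ^ 2) ^ ((lam - 1 / 2) / 2) *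
      ghW α δ μ x) ~[cocompact ℝ]
      (fun x => α ^ (-(1 / 2) : ℝ) * (|x| ^ (lam - 1) *
        Real.exp (-α * |x - μ| + β * (x - μ)))) := by
  have h0 : (0 : ℝ → ℝ) ≤ fun x : ℝ => |x| := fun x => abs_nonneg x
  have h1 := (ghR_equiv δ μ hδ).rpow h0 (r := lam - 1 / 2)
  have h2 := (ghR_equiv δ μ hδ).rpow h0 (r := -(1 / 2))
  have h3 := ghExp_equiv α δ μ hδ
  have h4 : (fun x : ℝ => α ^ (-(1 / 2) : ℝ) * Real.exp (β * (x - μ))) ~[cocompact ℝ]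
    (fun x : ℝ => α ^ (-(1 / 2) : ℝ) * Real.exp (β * (x - μ))) := IsEquivalent.refl
  have h5 := h4.mul ((h1.mul h2).mul h3)
  refine (h5.congr_left (Eventually.of_forall fun x => ?_)).congr_right ?_
  · have hp : 0 < δ ^ 2 + (x - μ) ^ 2 := by positivity
    simp only [Pi.mul_apply, Pi.pow_apply, ghW]
    rw [Real.mul_rpow hα.le (by positivity)]
    have : √(δ ^ 2 + (x - μ) ^ 2) ^ (lam - 1 / 2) =
        (δ ^ 2 + (x - μ) ^ 2) ^ ((lam - 1 / 2) / 2) := by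
      rw [Real.sqrt_eq_rpow, ← Real.rpow_mul hp.le]
      congr 1
      ring
    rw [this]
    ring
  · have hne : ∀ᶠ x : ℝ in cocompact ℝ, x ≠ 0 := by
      filter_upwards [(tendsto_norm_cocompact_atTop (E := ℝ)).eventually_gt_atTop 0] with x hx
      exact norm_pos_iff.1 hx
    filter_upwards [hne] with x hx
    simp only [Pi.mul_apply, Pi.pow_apply]
    rw [← Real.rpow_add (abs_pos.2 hx), Real.exp_add,
      show lam - 1 / 2 + -(1 / 2) = lam - 1 by ring]
    ring

lemma ghTarget_bigO (lam α β μ : ℝ) (hα : 0 < α) :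
    (fun x : ℝ => |x| ^ (lam - 1) * Real.exp (-α * |x - μ| + β * (x - μ))) =O[cocompact ℝ]
      (fun x => |x| ^ (lam - 1) * Real.exp (-α * |x| + β * x)) := by
  refine IsBigO.of_bound (Real.exp (α * |μ| - β * μ)) (Eventually.of_forall fun x => ?_)
  rw [Real.norm_of_nonneg (by positivity), Real.norm_of_nonneg (by positivity), mul_left_comm,
    ← Real.exp_add]
  refine mul_le_mul_of_nonneg_left (Real.exp_le_exp.2 ?_) (by positivity)
  have := abs_sub_abs_le_abs_sub x μ
  nlinarith

lemma ghDeriv (lam α β δ μ x : ℝ) (hα : 0 < α) (hδ : 0 < δ) :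
    deriv (ghPdf lam α β δ μ) x =
      ((α ^ 2 - β ^ 2) ^ (lam / 2) /
      (Real.sqrt (2 * Real.pi) * α ^ (lam - 1 / 2) * δ ^ lam *
        besselK lam (δ * Real.sqrt (α ^ 2 - β ^ 2)))) *
      (Real.exp (β * (x - μ)) * (δ ^ 2 + (x - μ) ^ 2) ^ ((lam - 1 / 2) / 2) *
      ((β + (lam - 1 / 2) * ((x - μ) / (δ ^ 2 + (x - μ) ^ 2))) *
          besselK (lam - 1 / 2) (α * √(δ ^ 2 + (x - μ) ^ 2))
        + (-(α / 2) * ((x - μ) / √(δ ^ 2 + (x - μ) ^ 2))) *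
          (besselK (lam - 1 / 2 + 1) (α * √(δ ^ 2 + (x - μ) ^ 2)) +
           besselK (lam - 1 / 2 - 1) (α * √(δ ^ 2 + (x - μ) ^ 2))))) := by
  have hp : 0 < δ ^ 2 + (x - μ) ^ 2 := by positivity
  have hs : 0 < √(δ ^ 2 + (x - μ) ^ 2) := by positivity
  have hu : HasDerivAt (fun x : ℝ => x - μ) 1 x := (hasDerivAt_id x).sub_const μ
  have hG : HasDerivAt (fun x : ℝ => δ ^ 2 + (x - μ) ^ 2) (2 * (x - μ)) x := by
    have := (hu.pow 2).const_add (δ ^ 2)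
    simpa using! this
  have hE : HasDerivAt (fun x : ℝ => Real.exp (β * (x - μ)))
      (Real.exp (β * (x - μ)) * (β * 1)) x := (hu.const_mul β).exp
  have hP := hG.rpow_const (p := (lam - 1 / 2) / 2) (Or.inl hp.ne')
  have hR := (hG.sqrt hp.ne').const_mul α
  have hK := (besselDeriv (lam - 1 / 2) _ (mul_pos hα hs)).comp x hR
  have hT := ((hE.const_mul ((α ^ 2 - β ^ 2) ^ (lam / 2) /
      (Real.sqrt (2 * Real.pi) * α ^ (lam - 1 / 2) * δ ^ lam *
        besselK lam (δ * Real.sqrt (α ^ 2 - β ^ 2))))).mul hP).mul hK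
  have hT' := hT.deriv
  refine Eq.trans ?_ (hT'.trans ?_)
  · rfl
  · simp only [Function.comp, Pi.mul_apply]
    rw [Real.rpow_sub_one hp.ne']
    generalize (α ^ 2 - β ^ 2) ^ (lam / 2) /
      (Real.sqrt (2 * Real.pi) * α ^ (lam - 1 / 2) * δ ^ lam *
        besselK lam (δ * Real.sqrt (α ^ 2 - β ^ 2))) = C
    generalize besselK (lam - 1 / 2) (α * √(δ ^ 2 + (x - μ) ^ 2)) = K0
    generalize besselK (lam - 1 / 2 + 1) (α * √(δ ^ 2 + (x - μ) ^ 2)) = K1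
    generalize besselK (lam - 1 / 2 - 1) (α * √(δ ^ 2 + (x - μ) ^ 2)) = K2
    generalize (δ ^ 2 + (x - μ) ^ 2) ^ ((lam - 1 / 2) / 2) = P
    generalize Real.exp (β * (x - μ)) = E
    generalize √(δ ^ 2 + (x - μ) ^ 2) = r at *
    generalize hGe : δ ^ 2 + (x - μ) ^ 2 = G at *
    field_simp

lemma ghBracket (lam α β δ μ : ℝ) (hα : 0 < α) (hδ : 0 < δ) :
    (fun x : ℝ => (β + (lam - 1 / 2) * ((x - μ) / (δ ^ 2 + (x - μ) ^ 2))) *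
          besselK (lam - 1 / 2) (α * √(δ ^ 2 + (x - μ) ^ 2))
        + (-(α / 2) * ((x - μ) / √(δ ^ 2 + (x - μ) ^ 2))) *
          (besselK (lam - 1 / 2 + 1) (α * √(δ ^ 2 + (x - μ) ^ 2)) +
           besselK (lam - 1 / 2 - 1) (α * √(δ ^ 2 + (x - μ) ^ 2)))) =O[cocompact ℝ]
      ghW α δ μ := by
  have b2 : (fun x : ℝ => (x - μ) / √(δ ^ 2 + (x - μ) ^ 2)) =O[cocompact ℝ]
      (fun _ => (1 : ℝ)) := by
    refine IsBigO.of_bound 1 (Eventually.of_forall fun x => ?_)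
    have hs : 0 < √(δ ^ 2 + (x - μ) ^ 2) := by positivity
    rw [norm_one, mul_one, norm_div, Real.norm_eq_abs, Real.norm_of_nonneg hs.le,
      div_le_one hs]
    exact ghR_ge _ _
  have b1 : (fun x : ℝ => (x - μ) / (δ ^ 2 + (x - μ) ^ 2)) =O[cocompact ℝ]
      (fun _ => (1 : ℝ)) := by
    refine IsBigO.of_bound (1 / δ) (Eventually.of_forall fun x => ?_)
    have hs : 0 < δ ^ 2 + (x - μ) ^ 2 := by positivity
    rw [norm_one, mul_one, norm_div, Real.norm_eq_abs, Real.norm_of_nonneg hs.le,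
      div_le_div_iff₀ hs hδ]
    nlinarith [sq_abs (x - μ), sq_nonneg (|x - μ| - δ), abs_nonneg (x - μ)]
  have c1 : (fun x : ℝ => β + (lam - 1 / 2) * ((x - μ) / (δ ^ 2 + (x - μ) ^ 2)))
      =O[cocompact ℝ] (fun _ => (1 : ℝ)) :=
    (isBigO_const_const β one_ne_zero _).add (b1.const_mul_left _)
  have t1 := c1.mul (ghK_bigO (lam - 1 / 2) α δ μ hα)
  have t2 := (b2.const_mul_left (-(α / 2))).mul
    ((ghK_bigO (lam - 1 / 2 + 1) α δ μ hα).add (ghK_bigO (lam - 1 / 2 - 1) α δ μ hα))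
  simpa only [one_mul] using! t1.add t2

theorem stmt9 (lam α β δ μ : ℝ) (hδ : 0 < δ) (hαβ : |β| < α) :
    (ghPdf lam α β δ μ) ~[Filter.cocompact ℝ]
      (fun x => ((α ^ 2 - β ^ 2) ^ (lam / 2) /
          (2 * (α * δ) ^ lam * besselK lam (δ * Real.sqrt (α ^ 2 - β ^ 2)))) *
        |x| ^ (lam - 1) * Real.exp (-α * |x - μ| + β * (x - μ)))
    ∧ (ghPdf lam α β δ μ) =O[Filter.cocompact ℝ]
        (fun x => |x| ^ (lam - 1) * Real.exp (-α * |x| + β * x))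
    ∧ (deriv (ghPdf lam α β δ μ)) =O[Filter.cocompact ℝ]
        (fun x => |x| ^ (lam - 1) * Real.exp (-α * |x| + β * x)) := by
  have hα : 0 < α := (abs_nonneg β).trans_lt hαβ
  have hH := ghH_equiv lam α β δ μ hα hδ
  have hEq : (ghPdf lam α β δ μ) ~[Filter.cocompact ℝ]
      (fun x => ((α ^ 2 - β ^ 2) ^ (lam / 2) /
          (2 * (α * δ) ^ lam * besselK lam (δ * Real.sqrt (α ^ 2 - β ^ 2)))) *
        |x| ^ (lam - 1) * Real.exp (-α * |x - μ| + β * (x - μ))) := by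
    have hK := ghK_equiv (lam - 1 / 2) α δ μ hα
    have h1 : (fun x : ℝ => ((α ^ 2 - β ^ 2) ^ (lam / 2) /
      (Real.sqrt (2 * Real.pi) * α ^ (lam - 1 / 2) * δ ^ lam *
        besselK lam (δ * Real.sqrt (α ^ 2 - β ^ 2)))) *
      Real.exp (β * (x - μ)) * (δ ^ 2 + (x - μ) ^ 2) ^ ((lam - 1 / 2) / 2)) ~[cocompact ℝ]
      (fun x : ℝ => ((α ^ 2 - β ^ 2) ^ (lam / 2) /
      (Real.sqrt (2 * Real.pi) * α ^ (lam - 1 / 2) * δ ^ lam *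
        besselK lam (δ * Real.sqrt (α ^ 2 - β ^ 2)))) *
      Real.exp (β * (x - μ)) * (δ ^ 2 + (x - μ) ^ 2) ^ ((lam - 1 / 2) / 2)) := IsEquivalent.refl
    have h2 := h1.mul hK
    have h3 : (fun _ : ℝ => ((α ^ 2 - β ^ 2) ^ (lam / 2) /
      (Real.sqrt (2 * Real.pi) * α ^ (lam - 1 / 2) * δ ^ lam *
        besselK lam (δ * Real.sqrt (α ^ 2 - β ^ 2)))) * √(π / 2)) ~[cocompact ℝ]
      (fun _ : ℝ => ((α ^ 2 - β ^ 2) ^ (lam / 2) /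
      (Real.sqrt (2 * Real.pi) * α ^ (lam - 1 / 2) * δ ^ lam *
        besselK lam (δ * Real.sqrt (α ^ 2 - β ^ 2)))) * √(π / 2)) := IsEquivalent.refl
    have h4 := h3.mul hH
    refine (h2.congr_right (Eventually.of_forall fun x => ?_)).trans
      (h4.congr_right (Eventually.of_forall fun x => ?_))
    · simp only [Pi.mul_apply]
      ring
    · simp only [Pi.mul_apply]
      have e1 : √(2 * π) = 2 * √(π / 2) := by
        rw [show 2 * π = 2 ^ 2 * (π / 2) by ring, Real.sqrt_mul (by positivity),
          Real.sqrt_sq (by norm_num)]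
      have e2 : α ^ (lam - 1 / 2) = α ^ lam * α ^ (-(1 / 2) : ℝ) := by
        rw [← Real.rpow_add hα]; congr 1
      rw [e1, e2, Real.mul_rpow hα.le hδ.le]
      have p1 : 0 < √(π / 2) := by positivity
      have p2 : 0 < α ^ lam := by positivity
      have p3 : 0 < α ^ (-(1 / 2) : ℝ) := by positivity
      have p4 : 0 < δ ^ lam := by positivity
      generalize besselK lam (δ * √(α ^ 2 - β ^ 2)) = K
      generalize √(π / 2) = q at *
      generalize α ^ (-(1 / 2) : ℝ) = w at *
      simp only [div_eq_mul_inv, mul_inv]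
      field_simp
  have hT := ghTarget_bigO lam α β μ hα
  have hH' := (hH.isBigO.trans (isBigO_const_mul_self _ _ _)).trans hT
  refine ⟨hEq, ?_, ?_⟩
  · refine hEq.isBigO.trans (IsBigO.trans ?_ hT)
    simp only [mul_assoc]
    exact isBigO_const_mul_self _ _ _
  · have hd : deriv (ghPdf lam α β δ μ) = fun x => _ :=
      funext fun x => ghDeriv lam α β δ μ x hα hδ
    rw [hd]
    refine (isBigO_const_mul_self _ _ _).trans (IsBigO.trans ?_ hH')
    exact (isBigO_refl _ _).mul (ghBracket lam α β δ μ hα hδ)
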